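/- arXiv:2412.10185 — 7 statements merged into one kernel-verified Lean document; each statement's English description precedes it below -/
import Mathlib

section
/- Let n ≥ 1 and let Q₁, Q₂ be n×n real matrices and r, v₁, v₂ : Fin n → ℝ vectors with v₁ = r + Q₁ v₁ and v₂ = r + Q₂ v₂. Suppose I − Q₁ is invertible and write M = (I − Q₁)⁻¹. Assume: (i) every entry of M satisfies 0 ≤ M i j ≤ c; (ii) for every row i, ∑_j |Q₁ i j − Q₂ i j| ≤ ε; (iii) |v₂ j| ≤ B for all j. Then |v₁ i − v₂ i| ≤ n · c · ε · B for every i. -/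
/-- Quantitative perturbation bound for linear fixed-point equations. -/
theorem stmt_1 (n : ℕ) (hn : 1 ≤ n)
    (Q₁ Q₂ : Matrix (Fin n) (Fin n) ℝ) (r v₁ v₂ : Fin n → ℝ)
    (h1 : v₁ = r + Q₁.mulVec v₁) (h2 : v₂ = r + Q₂.mulVec v₂)
    (hinv : IsUnit (1 - Q₁))
    (M : Matrix (Fin n) (Fin n) ℝ) (hM : M = (1 - Q₁)⁻¹)
    (c : ℝ) (hMc : ∀ i j, 0 ≤ M i j ∧ M i j ≤ c)
    (ε : ℝ) (hrow : ∀ i, ∑ j, |Q₁ i j - Q₂ i j| ≤ ε)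
    (B : ℝ) (hv₂ : ∀ j, |v₂ j| ≤ B) :
    ∀ i, |v₁ i - v₂ i| ≤ n * c * ε * B := by
  intro i
  have key : (1 - Q₁).mulVec (v₁ - v₂) = (Q₁ - Q₂).mulVec v₂ := by
    rw [Matrix.sub_mulVec, Matrix.sub_mulVec, Matrix.one_mulVec, Matrix.mulVec_sub]
    funext k
    have e1 := congrFun h1 k
    have e2 := congrFun h2 k
    simp only [Pi.add_apply, Pi.sub_apply] at e1 e2 ⊢
    linarith
  have hM1 : M * (1 - Q₁) = 1 := by
    rw [hM]
    exact Matrix.nonsing_inv_mul _ ((Matrix.isUnit_iff_isUnit_det _).1 hinv)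
  have hd : v₁ - v₂ = M.mulVec ((Q₁ - Q₂).mulVec v₂) := by
    rw [← key, Matrix.mulVec_mulVec, hM1, Matrix.one_mulVec]
  have hB : 0 ≤ B := (abs_nonneg _).trans (hv₂ i)
  have hε : 0 ≤ ε := (Finset.sum_nonneg fun j _ => abs_nonneg _).trans (hrow i)
  have hw : ∀ k, |(Q₁ - Q₂).mulVec v₂ k| ≤ ε * B := by
    intro k
    calc |(Q₁ - Q₂).mulVec v₂ k| = |∑ j, (Q₁ k j - Q₂ k j) * v₂ j| := rfl
      _ ≤ ∑ j, |(Q₁ k j - Q₂ k j) * v₂ j| := Finset.abs_sum_le_sum_abs _ _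
      _ ≤ ∑ j, |Q₁ k j - Q₂ k j| * B := by
        refine Finset.sum_le_sum fun j _ => ?_
        rw [abs_mul]
        exact mul_le_mul_of_nonneg_left (hv₂ j) (abs_nonneg _)
      _ = (∑ j, |Q₁ k j - Q₂ k j|) * B := by rw [Finset.sum_mul]
      _ ≤ ε * B := mul_le_mul_of_nonneg_right (hrow k) hB
  have hdi := congrFun hd i
  rw [Pi.sub_apply] at hdi
  rw [hdi]
  calc |M.mulVec ((Q₁ - Q₂).mulVec v₂) i|
      = |∑ k, M i k * (Q₁ - Q₂).mulVec v₂ k| := rfl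
    _ ≤ ∑ k, |M i k * (Q₁ - Q₂).mulVec v₂ k| := Finset.abs_sum_le_sum_abs _ _
    _ ≤ ∑ _k : Fin n, c * (ε * B) := by
      refine Finset.sum_le_sum fun k _ => ?_
      rw [abs_mul, abs_of_nonneg (hMc i k).1]
      exact mul_le_mul (hMc i k).2 (hw k) (abs_nonneg _) ((hMc i k).1.trans (hMc i k).2)
    _ = n * c * ε * B := by
      rw [Finset.sum_const, Finset.card_univ, Fintype.card_fin, nsmul_eq_mul]
      ring
end

section
/- Let n ≥ 1, let q : Fin n → ℝ be in the standard probability simplex, and let L : Fin n → ℝ. Set L̄ = (∑ i L i)/n, x i = L i − L̄, and assume x ≠ 0. Let ζ > 0 and write ‖x‖ = √(∑ i (x i)²). Assume q i + ζ · x i / ‖x‖ ≥ 0 for all i, and define p* i = q i + ζ · x i / ‖x‖. Then: (a) p* lies in the standard probability simplex; (b) √(∑ i (p* i − q i)²) = ζ; (c) for every p in the standard probability simplex with √(∑ i (p i − q i)²) ≤ ζ one has ∑ i p i · L i ≤ ∑ i p* i · L i = ∑ i q i · L i + ζ‖x‖. -/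
/-- Closed-form maximizer of a linear objective over an `L²`-ball of radius `ζ`
around a distribution `q`, intersected with the probability simplex. -/
theorem stmt_5 (n : ℕ) (hn : 1 ≤ n)
    (q : Fin n → ℝ) (hq : q ∈ stdSimplex ℝ (Fin n))
    (L : Fin n → ℝ)
    (x : Fin n → ℝ) (hx : ∀ i, x i = L i - (∑ j, L j) / n)
    (hx0 : x ≠ 0)
    (ζ : ℝ) (hζ : 0 < ζ)
    (hnn : ∀ i, 0 ≤ q i + ζ * x i / Real.sqrt (∑ j, x j ^ 2))
    (pstar : Fin n → ℝ)
    (hpstar : ∀ i, pstar i = q i + ζ * x i / Real.sqrt (∑ j, x j ^ 2)) :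
    pstar ∈ stdSimplex ℝ (Fin n) ∧
    Real.sqrt (∑ i, (pstar i - q i) ^ 2) = ζ ∧
    (∀ p ∈ stdSimplex ℝ (Fin n), Real.sqrt (∑ i, (p i - q i) ^ 2) ≤ ζ →
      ∑ i, p i * L i ≤ ∑ i, pstar i * L i) ∧
    ∑ i, pstar i * L i = ∑ i, q i * L i + ζ * Real.sqrt (∑ j, x j ^ 2) := by
  obtain ⟨hq0, hq1⟩ := hq
  have hn0 : (n : ℝ) ≠ 0 := by
    have : n ≠ 0 := by omega
    exact_mod_cast this
  have hsx : ∑ i, x i = 0 := by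
    simp only [hx, Finset.sum_sub_distrib, Finset.sum_const, Finset.card_univ, Fintype.card_fin,
      nsmul_eq_mul]
    field_simp
    ring
  have hpos : 0 < ∑ j, x j ^ 2 := by
    obtain ⟨k, hk⟩ := Function.ne_iff.mp hx0
    have hk' : x k ≠ 0 := hk
    exact Finset.sum_pos' (fun i _ => sq_nonneg _) ⟨k, Finset.mem_univ _, by positivity⟩
  have hS : 0 < Real.sqrt (∑ j, x j ^ 2) := Real.sqrt_pos.mpr hpos
  have hSS : Real.sqrt (∑ j, x j ^ 2) ^ 2 = ∑ j, x j ^ 2 := Real.sq_sqrt hpos.le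
  have key : ∀ p : Fin n → ℝ, ∑ i, p i = 1 →
      ∑ i, p i * L i = ∑ i, q i * L i + ∑ i, (p i - q i) * x i := by
    intro p hp
    have h1 : ∑ i, (p i - q i) * x i
        = ∑ i, p i * L i - ∑ i, q i * L i
          - (∑ i, p i - ∑ i, q i) * ((∑ j, L j) / n) := by
      rw [← Finset.sum_sub_distrib, ← Finset.sum_sub_distrib, Finset.sum_mul,
        ← Finset.sum_sub_distrib]
      refine Finset.sum_congr rfl fun i _ => ?_
      rw [hx i]
      ring
    rw [h1, hp, hq1]
    ring
  set S := Real.sqrt (∑ j, x j ^ 2) with hSdef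
  have hd : ∀ i, pstar i - q i = ζ / S * x i := by
    intro i
    rw [hpstar i]
    ring
  have hp1 : ∑ i, pstar i = 1 := by
    have h : ∑ i, (pstar i - q i) = 0 := by
      simp only [hd]
      rw [← Finset.mul_sum, hsx, mul_zero]
    rw [Finset.sum_sub_distrib, hq1] at h
    linarith
  have hval : ∑ i, pstar i * L i = ∑ i, q i * L i + ζ * S := by
    rw [key pstar hp1]
    congr 1
    have : ∑ i, (pstar i - q i) * x i = ζ / S * ∑ i, x i ^ 2 := by
      rw [Finset.mul_sum]
      refine Finset.sum_congr rfl fun i _ => ?_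
      rw [hd i]
      ring
    rw [this, ← hSS]
    field_simp
  refine ⟨⟨fun i => by rw [hpstar i]; exact hnn i, hp1⟩, ?_, ?_, hval⟩
  · have : ∑ i, (pstar i - q i) ^ 2 = ζ ^ 2 := by
      simp only [hd, mul_pow]
      rw [← Finset.mul_sum, ← hSS]
      field_simp
    rw [this, Real.sqrt_sq hζ.le]
  · intro p hp hpz
    rw [hval, key p hp.2]
    have h1 := Real.sum_mul_le_sqrt_mul_sqrt Finset.univ (fun i => p i - q i) x
    have h2 : Real.sqrt (∑ i, (p i - q i) ^ 2) * S ≤ ζ * S :=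
      mul_le_mul_of_nonneg_right hpz hS.le
    have h3 := h1.trans h2
    linarith
end

section
/- Let n ≥ 1, let q be in the standard probability simplex over Fin n, and let L : Fin n → ℝ. Let i⁺ be an index attaining max_i L i and i⁻ an index attaining min_i L i, with i⁺ ≠ i⁻. Let ζ ≥ 0 satisfy ζ/2 ≤ q i⁻ and q i⁺ + ζ/2 ≤ 1. Define p* by p* i⁺ = q i⁺ + ζ/2, p* i⁻ = q i⁻ − ζ/2, and p* i = q i otherwise. Then p* lies in the standard probability simplex, ∑ i |p* i − q i| = ζ, and for every p in the standard probability simplex with ∑ i |p i − q i| ≤ ζ one has ∑ i p i · L i ≤ ∑ i p* i · L i = ∑ i q i · L i + (ζ/2)(max_i L i − min_i L i). -/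
/-- Correctness of the greedy maximizer over an `L¹`-ball around a distribution `q`:
move `ζ/2` mass to a highest-value coordinate and remove `ζ/2` mass from a
lowest-value coordinate. -/
theorem stmt_7 (n : ℕ) (hn : 1 ≤ n)
    (q : Fin n → ℝ) (hq : q ∈ stdSimplex ℝ (Fin n))
    (L : Fin n → ℝ)
    (iplus iminus : Fin n)
    (hplus : ∀ i, L i ≤ L iplus) (hminus : ∀ i, L iminus ≤ L i)
    (hne : iplus ≠ iminus)
    (ζ : ℝ) (hζ : 0 ≤ ζ) (hlow : ζ / 2 ≤ q iminus) (hhigh : q iplus + ζ / 2 ≤ 1)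
    (pstar : Fin n → ℝ)
    (hp1 : pstar iplus = q iplus + ζ / 2)
    (hp2 : pstar iminus = q iminus - ζ / 2)
    (hp3 : ∀ i, i ≠ iplus → i ≠ iminus → pstar i = q i) :
    pstar ∈ stdSimplex ℝ (Fin n) ∧
    (∑ i, |pstar i - q i|) = ζ ∧
    (∀ p ∈ stdSimplex ℝ (Fin n), (∑ i, |p i - q i|) ≤ ζ →
      ∑ i, p i * L i ≤ ∑ i, pstar i * L i) ∧
    ∑ i, pstar i * L i = ∑ i, q i * L i + (ζ / 2) * (L iplus - L iminus) := by
  obtain ⟨hq0, hq1⟩ := hq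
  have hps : ∀ i, pstar i = q i + (if i = iplus then ζ / 2 else 0)
      - (if i = iminus then ζ / 2 else 0) := by
    intro i
    by_cases h1 : i = iplus
    · subst h1; simp [hp1, hne]
    · by_cases h2 : i = iminus
      · subst h2; simp [hp2, h1]
      · simp [h1, h2, hp3 i h1 h2]
  have habs : ∀ i, |pstar i - q i| = (if i = iplus then ζ / 2 else 0)
      + (if i = iminus then ζ / 2 else 0) := by
    intro i
    have hz : 0 ≤ ζ / 2 := by linarith
    by_cases h1 : i = iplus
    · subst h1; simp [hp1, hne, abs_of_nonneg hz]
    · by_cases h2 : i = iminus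
      · subst h2; simp [hp2, h1, hz]
      · simp [h1, h2, hp3 i h1 h2]
  have hval : ∑ i, pstar i * L i = ∑ i, q i * L i + (ζ / 2) * (L iplus - L iminus) := by
    simp only [hps, sub_mul, add_mul, ite_mul, zero_mul, Finset.sum_sub_distrib,
      Finset.sum_add_distrib, Finset.sum_ite_eq', Finset.mem_univ, if_true]
    ring
  refine ⟨⟨?_, ?_⟩, ?_, ?_, hval⟩
  · intro i
    by_cases h1 : i = iplus
    · subst h1; rw [hp1]; linarith [hq0 i]
    · by_cases h2 : i = iminus
      · subst h2; rw [hp2]; linarith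
      · rw [hp3 i h1 h2]; exact hq0 i
  · simp only [hps, Finset.sum_sub_distrib, Finset.sum_add_distrib, Finset.sum_ite_eq',
      Finset.mem_univ, if_true, hq1]
    ring
  · simp only [habs, Finset.sum_add_distrib, Finset.sum_ite_eq', Finset.mem_univ, if_true]
    ring
  · rintro p ⟨_, hpsum⟩ hpd
    rw [hval]
    have key : ∀ i, p i * L i - q i * L i - (p i - q i) * ((L iplus + L iminus) / 2)
        ≤ |p i - q i| * ((L iplus - L iminus) / 2) := by
      intro i
      have h : (p i - q i) * (L i - (L iplus + L iminus) / 2)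
          ≤ |p i - q i| * ((L iplus - L iminus) / 2) := by
        refine (le_abs_self _).trans ?_
        rw [abs_mul]
        refine mul_le_mul_of_nonneg_left ?_ (abs_nonneg _)
        rw [abs_le]
        constructor <;> linarith [hplus i, hminus i]
      linarith
    have hs := Finset.sum_le_sum (fun i (_ : i ∈ Finset.univ) => key i)
    simp only [Finset.sum_sub_distrib, ← Finset.sum_mul, hpsum, hq1] at hs
    have hm := mul_le_mul_of_nonneg_right hpd
      (show 0 ≤ (L iplus - L iminus) / 2 by linarith [hplus iminus])
    linarith
end

section
/- Let n ≥ 1 and let l, u : Fin n → ℝ with 0 ≤ l i ≤ u i for all i, ∑ i l i ≤ 1, and ∑ i u i ≥ 1. Let K = { p : Fin n → ℝ | ∀ i, l i ≤ p i ≤ u i, and ∑ i p i = 1 } and let L : Fin n → ℝ. Then there exist p* ∈ K and a threshold θ ∈ ℝ such that p* maximizes ∑ i p i · L i over K, and for every index i: if L i > θ then p* i = u i, and if L i < θ then p* i = l i. -/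
/-- Ordering-maximization for interval (rectangular) uncertainty sets: a linear objective
over the polytope of distributions with coordinatewise bounds `l ≤ p ≤ u` is maximized
by a threshold policy. -/
theorem stmt_8 (n : ℕ) (hn : 1 ≤ n)
    (l u : Fin n → ℝ) (hlu : ∀ i, 0 ≤ l i ∧ l i ≤ u i)
    (hl : ∑ i, l i ≤ 1) (hu : 1 ≤ ∑ i, u i)
    (L : Fin n → ℝ) :
    ∃ pstar ∈ {p : Fin n → ℝ | (∀ i, l i ≤ p i ∧ p i ≤ u i) ∧ ∑ i, p i = 1},
      ∃ θ : ℝ,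
        (∀ p ∈ {p : Fin n → ℝ | (∀ i, l i ≤ p i ∧ p i ≤ u i) ∧ ∑ i, p i = 1},
          ∑ i, p i * L i ≤ ∑ i, pstar i * L i) ∧
        ∀ i, (θ < L i → pstar i = u i) ∧ (L i < θ → pstar i = l i) := by
  classical
  set G : ℝ → ℝ := fun t => ∑ i, (if t < L i then u i else l i) with hG
  set H : ℝ → ℝ := fun t => ∑ i, (if t ≤ L i then u i else l i) with hH
  have hne : (Finset.univ : Finset (Fin n)).Nonempty := ⟨⟨0, hn⟩, Finset.mem_univ _⟩
  obtain ⟨m, -, hm⟩ := Finset.exists_min_image Finset.univ L hne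
  have hHm : 1 ≤ H (L m) := by
    have : H (L m) = ∑ i, u i := Finset.sum_congr rfl fun i hi => if_pos (hm i hi)
    rw [this]; exact hu
  obtain ⟨k, hk, hkmax⟩ := Finset.exists_max_image
    (Finset.univ.filter fun j => 1 ≤ H (L j)) L ⟨m, by simpa using hHm⟩
  have hHk : 1 ≤ H (L k) := (Finset.mem_filter.1 hk).2
  have hGk : G (L k) ≤ 1 := by
    by_cases hS : (Finset.univ.filter fun j => L k < L j).Nonempty
    · obtain ⟨j, hj, hjmin⟩ := Finset.exists_min_image _ L hS
      have hkj : L k < L j := (Finset.mem_filter.1 hj).2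
      have hHj : H (L j) < 1 := by
        by_contra hc
        have := hkmax j (Finset.mem_filter.2 ⟨Finset.mem_univ _, not_lt.1 hc⟩)
        linarith
      have : G (L k) = H (L j) := by
        refine Finset.sum_congr rfl fun i _ => ?_
        by_cases hi : L k < L i
        · rw [if_pos hi, if_pos (hjmin i (Finset.mem_filter.2 ⟨Finset.mem_univ _, hi⟩))]
        · rw [if_neg hi, if_neg (by linarith)]
      linarith
    · have : G (L k) = ∑ i, l i := Finset.sum_congr rfl fun i _ => if_neg fun hi =>
        hS ⟨i, Finset.mem_filter.2 ⟨Finset.mem_univ _, hi⟩⟩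
      linarith
  obtain ⟨a, ha0, ha1, ha⟩ : ∃ a : ℝ, 0 ≤ a ∧ a ≤ 1 ∧ (1 - a) * G (L k) + a * H (L k) = 1 := by
    rcases eq_or_lt_of_le (hGk.trans hHk) with h | h
    · exact ⟨0, le_rfl, zero_le_one, by linarith⟩
    · have hd : 0 < H (L k) - G (L k) := by linarith
      refine ⟨(1 - G (L k)) / (H (L k) - G (L k)), div_nonneg (by linarith) hd.le,
        (div_le_one hd).2 (by linarith), ?_⟩
      field_simp
      ring
  set q : Fin n → ℝ := fun i => (1 - a) * (if L k < L i then u i else l i) +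
    a * (if L k ≤ L i then u i else l i) with hq
  have hqu : ∀ i, L k < L i → q i = u i := fun i hi => by
    simp only [hq, if_pos hi, if_pos hi.le]; ring
  have hql : ∀ i, L i < L k → q i = l i := fun i hi => by
    simp only [hq, if_neg hi.le.not_gt, if_neg hi.not_ge]; ring
  have hqs : ∑ i, q i = 1 := by
    rw [← ha]
    simp only [hq, hG, hH, Finset.sum_add_distrib, Finset.mul_sum]
  refine ⟨q, ⟨fun i => ?_, hqs⟩, L k, ?_, fun i => ⟨hqu i, hql i⟩⟩
  · have h := (hlu i).2
    simp only [hq]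
    split_ifs <;> constructor <;> nlinarith
  · rintro p ⟨hp, hps⟩
    have key : 0 ≤ ∑ i, (q i - p i) * (L i - L k) := by
      refine Finset.sum_nonneg fun i _ => ?_
      rcases lt_trichotomy (L i) (L k) with h | h | h
      · rw [hql i h]
        exact mul_nonneg_of_nonpos_of_nonpos (by linarith [(hp i).1]) (by linarith)
      · simp [h]
      · rw [hqu i h]
        exact mul_nonneg (by linarith [(hp i).2]) (by linarith)
    have e : ∑ i, (q i - p i) * (L i - L k) =
        ∑ i, q i * L i - ∑ i, p i * L i - (∑ i, q i - ∑ i, p i) * L k := by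
      rw [sub_mul, Finset.sum_mul, Finset.sum_mul, ← Finset.sum_sub_distrib,
        ← Finset.sum_sub_distrib, ← Finset.sum_sub_distrib]
      exact Finset.sum_congr rfl fun i _ => by ring
    rw [hqs, hps] at e
    linarith
end

section
/- Let S be a finite nonempty type, for each s ∈ S let A(s) be a nonempty finite set of actions, for each s and a ∈ A(s) let 𝒫(s,a) be a nonempty set of probability distributions on S, let r(s,a) ∈ ℝ, and let γ ∈ [0,1]. Define the robust Bellman operator T by (T V)(s) = max_{a∈A(s)} inf_{P∈𝒫(s,a)} ( r(s,a) + γ · ∑_{s'} P(s') · V(s') ). Then for all V, W : S → ℝ and all s ∈ S, |(T V)(s) − (T W)(s)| ≤ γ · max_{s'} |V(s') − W(s')|. In particular, for γ < 1 the robust Bellman operator is a γ-contraction in the supremum norm. -/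
theorem aux_avg {S : Type*} [Fintype S] {P : S → ℝ} (hP : P ∈ stdSimplex ℝ S)
    (V W : S → ℝ) (c : ℝ) (h : ∀ s, V s ≤ W s + c) :
    ∑ s, P s * V s ≤ ∑ s, P s * W s + c := by
  calc ∑ s, P s * V s ≤ ∑ s, P s * (W s + c) :=
        Finset.sum_le_sum fun s _ => mul_le_mul_of_nonneg_left (h s) (hP.1 s)
    _ = ∑ s, P s * W s + c := by
        simp only [mul_add, Finset.sum_add_distrib, ← Finset.sum_mul, hP.2, one_mul]

/-- The robust (max–min) Bellman operator is `γ`-Lipschitz in the supremum norm. -/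
theorem stmt_9 (S : Type*) [Fintype S] [Nonempty S] (Act : Type*)
    (A : S → Finset Act) (hA : ∀ s, (A s).Nonempty)
    (Unc : S → Act → Set (S → ℝ))
    (hUncne : ∀ s, ∀ a ∈ A s, (Unc s a).Nonempty)
    (hUnc : ∀ s, ∀ a ∈ A s, Unc s a ⊆ stdSimplex ℝ S)
    (r : S → Act → ℝ) (γ : ℝ) (hγ0 : 0 ≤ γ) (hγ1 : γ ≤ 1)
    (T : (S → ℝ) → S → ℝ)
    (hT : ∀ V s, T V s = (A s).sup' (hA s) fun a =>
      sInf ((fun P => r s a + γ * ∑ s', P s' * V s') '' Unc s a)) :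
    ∀ (V W : S → ℝ) (s : S),
      |T V s - T W s| ≤
        γ * Finset.univ.sup' Finset.univ_nonempty (fun s' => |V s' - W s'|) := by
  have key : ∀ (V W : S → ℝ) (s : S) (M : ℝ), (∀ s', |V s' - W s'| ≤ M) →
      T V s ≤ T W s + γ * M := by
    intro V W s M hM
    rw [hT V s]
    refine Finset.sup'_le _ _ fun a ha => ?_
    have h1 : sInf ((fun P : S → ℝ => r s a + γ * ∑ s', P s' * W s') '' Unc s a) ≤ T W s := by
      rw [hT W s]
      exact Finset.le_sup'_of_le _ ha le_rfl
    have hb : BddBelow ((fun P : S → ℝ => r s a + γ * ∑ s', P s' * V s') '' Unc s a) := by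
      refine ⟨r s a + γ * (-∑ s', |V s'|), ?_⟩
      rintro _ ⟨P, hP, rfl⟩
      have h2 := aux_avg (hUnc s a ha hP) (fun _ => 0) V (∑ s', |V s'|) (fun s' => by
        have h3 := Finset.single_le_sum (f := fun s' => |V s'|)
          (fun i _ => abs_nonneg (V i)) (Finset.mem_univ s')
        have h4 := neg_abs_le (V s')
        linarith)
      simp only [mul_zero, Finset.sum_const_zero] at h2
      have := mul_le_mul_of_nonneg_left (show -∑ s', |V s'| ≤ ∑ s', P s' * V s' by linarith) hγ0
      simp only
      linarith
    have h5 : sInf ((fun P : S → ℝ => r s a + γ * ∑ s', P s' * V s') '' Unc s a) - γ * M ≤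
        sInf ((fun P : S → ℝ => r s a + γ * ∑ s', P s' * W s') '' Unc s a) := by
      refine le_csInf ((hUncne s a ha).image _) ?_
      rintro _ ⟨P, hP, rfl⟩
      have h6 := csInf_le hb ⟨P, hP, rfl⟩
      have h7 := mul_le_mul_of_nonneg_left (aux_avg (hUnc s a ha hP) V W M (fun s' => by
        have := le_abs_self (V s' - W s')
        linarith [hM s'])) hγ0
      simp only at h6 ⊢
      linarith
    linarith
  intro V W s
  have hM : ∀ s', |V s' - W s'| ≤
      Finset.univ.sup' Finset.univ_nonempty (fun s' => |V s' - W s'|) := fun s' =>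
    Finset.le_sup' (fun s' => |V s' - W s'|) (Finset.mem_univ s')
  have h1 := key V W s _ hM
  have h2 := key W V s _ (fun s' => by rw [abs_sub_comm]; exact hM s')
  rw [abs_le]
  constructor <;> linarith
end

section
/- Let n ≥ 1, let P be in the standard probability simplex over Fin n, let p ∈ (0,1), let k ≥ 1 be a natural number, and let w : Fin n → ℝ with w i ≤ 1 for all i. Suppose there exists an index t with P t ≥ p and w t ≤ 1 − p^(2(k−1)). Then ∑ i P i · w i ≤ 1 − p^(2k−1). -/
/-- One-step weighted inequality: if a distribution `P` puts mass at least `p` on an index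
whose weight is at most `1 - p^(2(k-1))`, and all weights are at most 1, then the
`P`-average of the weights is at most `1 - p^(2k-1)`. -/
theorem stmt_11 (n : ℕ) (hn : 1 ≤ n)
    (P : Fin n → ℝ) (hP : P ∈ stdSimplex ℝ (Fin n))
    (p : ℝ) (hp0 : 0 < p) (hp1 : p < 1)
    (k : ℕ) (hk : 1 ≤ k)
    (w : Fin n → ℝ) (hw : ∀ i, w i ≤ 1)
    (ht : ∃ t, p ≤ P t ∧ w t ≤ 1 - p ^ (2 * (k - 1))) :
    ∑ i, P i * w i ≤ 1 - p ^ (2 * k - 1) := by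
  obtain ⟨t, hpt, hwt⟩ := ht
  obtain ⟨hnn, hsum⟩ := hP
  have h1 : P t * (1 - w t) ≤ ∑ i, P i * (1 - w i) :=
    Finset.single_le_sum (f := fun i => P i * (1 - w i))
      (fun i _ => mul_nonneg (hnn i) (sub_nonneg.mpr (hw i))) (Finset.mem_univ t)
  have h2 : ∑ i, P i * (1 - w i) = 1 - ∑ i, P i * w i := by
    simp only [mul_sub, mul_one, Finset.sum_sub_distrib, hsum]
  have h3 : p * p ^ (2 * (k - 1)) ≤ P t * (1 - w t) :=
    mul_le_mul hpt (by linarith) (by positivity) (hnn t)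
  have h4 : p ^ (2 * k - 1) = p * p ^ (2 * (k - 1)) := by
    rw [← pow_succ']
    congr 1
    omega
  linarith
end

section
/- Let S be a finite nonempty type, p ∈ (0,1), m ≥ 1, and ρ : S → ℕ a rank function with 1 ≤ ρ(t) ≤ m for all t ∈ S. Define weights w(t) = 1 − p^(2·ρ(t)) and γ = (1 − p^(2m−1))/(1 − p^(2m)). Fix a state s with ρ(s) ≥ 2, a nonempty finite action set A, for each a ∈ A a nonempty set 𝒫(a) of probability distributions on S and a reward r(a) ∈ ℝ. Suppose that for every a ∈ A and every P ∈ 𝒫(a) there exists t ∈ S with P(t) ≥ p and ρ(t) < ρ(s). Then for all V, W : S → ℝ: | max_{a∈A} inf_{P∈𝒫(a)} ( r(a) + ∑_{t} P(t)·V(t) ) − max_{a∈A} inf_{P∈𝒫(a)} ( r(a) + ∑_{t} P(t)·W(t) ) | ≤ γ · w(s) · max_{t ∈ S} ( |V(t) − W(t)| / w(t) ). -/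
theorem aux_sup_inf {S Act : Type*} [Fintype S] (A : Finset Act) (hA : A.Nonempty)
    (Unc : Act → Set (S → ℝ))
    (hUncne : ∀ a ∈ A, (Unc a).Nonempty)
    (hUnc : ∀ a ∈ A, Unc a ⊆ stdSimplex ℝ S)
    (r : Act → ℝ) (V W : S → ℝ) (C : ℝ)
    (h : ∀ a ∈ A, ∀ P ∈ Unc a, ∑ t, P t * V t ≤ ∑ t, P t * W t + C) :
    A.sup' hA (fun a => sInf ((fun P => r a + ∑ t, P t * V t) '' Unc a)) ≤
    A.sup' hA (fun a => sInf ((fun P => r a + ∑ t, P t * W t) '' Unc a)) + C := by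
  apply Finset.sup'_le
  intro a ha
  have h1 := Finset.le_sup' (fun a => sInf ((fun P => r a + ∑ t, P t * W t) '' Unc a)) ha
  have h2 : sInf ((fun P => r a + ∑ t, P t * V t) '' Unc a) - C ≤
      sInf ((fun P => r a + ∑ t, P t * W t) '' Unc a) := by
    apply le_csInf ((hUncne a ha).image _)
    rintro _ ⟨P, hP, rfl⟩
    have hb : BddBelow ((fun P => r a + ∑ t, P t * V t) '' Unc a) := by
      refine ⟨r a + ∑ t, -|V t|, ?_⟩
      rintro _ ⟨Q, hQ, rfl⟩
      have hQ' := hUnc a ha hQ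
      have : ∑ t, -|V t| ≤ ∑ t, Q t * V t := by
        apply Finset.sum_le_sum
        intro t _
        have h0 : 0 ≤ Q t := hQ'.1 t
        have h1 : Q t ≤ 1 := by
          rw [← hQ'.2]
          exact Finset.single_le_sum (fun i _ => hQ'.1 i) (Finset.mem_univ t)
        have := neg_abs_le (V t)
        have := abs_nonneg (V t)
        nlinarith
      simpa using this
    have h3 := csInf_le hb ⟨P, hP, rfl⟩
    have h4 := h a ha P hP
    simp only at h3 ⊢
    linarith
  linarith

/-- Single-state contraction estimate for the robust Bellman operator with respect to the
weighted supremum metric, at a state of rank at least 2 all of whose actions and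
distributions reach a lower-rank state with probability at least `p`. -/
theorem stmt_14 (S : Type*) [Fintype S] [Nonempty S]
    (p : ℝ) (hp0 : 0 < p) (hp1 : p < 1)
    (m : ℕ) (hm : 1 ≤ m)
    (ρ : S → ℕ) (hρ1 : ∀ t, 1 ≤ ρ t) (hρm : ∀ t, ρ t ≤ m)
    (w : S → ℝ) (hw : ∀ t, w t = 1 - p ^ (2 * ρ t))
    (γ : ℝ) (hγ : γ = (1 - p ^ (2 * m - 1)) / (1 - p ^ (2 * m)))
    (s : S) (hs : 2 ≤ ρ s)
    (Act : Type*) (A : Finset Act) (hA : A.Nonempty)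
    (Unc : Act → Set (S → ℝ))
    (hUncne : ∀ a ∈ A, (Unc a).Nonempty)
    (hUnc : ∀ a ∈ A, Unc a ⊆ stdSimplex ℝ S)
    (r : Act → ℝ)
    (hreach : ∀ a ∈ A, ∀ P ∈ Unc a, ∃ t, p ≤ P t ∧ ρ t < ρ s) :
    ∀ V W : S → ℝ,
      |A.sup' hA (fun a => sInf ((fun P => r a + ∑ t, P t * V t) '' Unc a)) -
        A.sup' hA (fun a => sInf ((fun P => r a + ∑ t, P t * W t) '' Unc a))| ≤
      γ * w s * Finset.univ.sup' Finset.univ_nonempty (fun t => |V t - W t| / w t) := by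
  have key : ∀ a ∈ A, ∀ P ∈ Unc a, ∑ t, P t * w t ≤ γ * w s := by
    intro a ha P hP
    obtain ⟨hP0, hP1⟩ := hUnc a ha hP
    obtain ⟨t, hpt, hts⟩ := hreach a ha P hP
    have e1 : ∑ t, P t * w t = 1 - ∑ t, P t * p ^ (2 * ρ t) := by
      rw [← hP1, ← Finset.sum_sub_distrib]
      exact Finset.sum_congr rfl fun i _ => by rw [hw, mul_sub, mul_one]
    have e2 : P t * p ^ (2 * ρ t) ≤ ∑ t, P t * p ^ (2 * ρ t) :=
      Finset.single_le_sum (f := fun t => P t * p ^ (2 * ρ t))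
        (fun i _ => mul_nonneg (hP0 i) (by positivity)) (Finset.mem_univ t)
    have e3 : p ^ (2 * ρ s - 1) ≤ P t * p ^ (2 * ρ t) := by
      calc p ^ (2 * ρ s - 1) ≤ p ^ (2 * ρ t + 1) :=
            pow_le_pow_of_le_one hp0.le hp1.le (by omega)
        _ = p * p ^ (2 * ρ t) := by ring
        _ ≤ _ := by gcongr
    have e4 : p ^ (2 * m - 1) ≤ p ^ (2 * ρ s - 1) :=
      pow_le_pow_of_le_one hp0.le hp1.le (by have := hρm s; omega)
    have e5 : p ^ (2 * m) = p * p ^ (2 * m - 1) := by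
      rw [← pow_succ']; congr 1; omega
    have e6 : p ^ (2 * ρ s) = p * p ^ (2 * ρ s - 1) := by
      rw [← pow_succ']; congr 1; omega
    have e7 : p ^ (2 * m) < 1 := pow_lt_one₀ hp0.le hp1 (by omega)
    have e8 : 1 - p ^ (2 * ρ s - 1) ≤ γ * w s := by
      rw [hγ, hw, div_mul_eq_mul_div, le_div_iff₀ (by linarith), e5, e6]
      nlinarith [mul_nonneg (sub_nonneg.2 e4) (sub_nonneg.2 hp1.le)]
    linarith
  have hwpos : ∀ t, 0 < w t := by
    intro t
    rw [hw]
    have := pow_lt_one₀ hp0.le hp1 (n := 2 * ρ t) (by have := hρ1 t; omega)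
    linarith
  intro V W
  set M := Finset.univ.sup' Finset.univ_nonempty (fun t => |V t - W t| / w t) with hM
  have hMt : ∀ t, |V t - W t| ≤ M * w t := by
    intro t
    rw [← div_le_iff₀ (hwpos t)]
    exact Finset.le_sup' (fun t => |V t - W t| / w t) (Finset.mem_univ t)
  have hM0 : 0 ≤ M := by
    have := (abs_nonneg _).trans (hMt s)
    exact nonneg_of_mul_nonneg_left this (hwpos s)
  have main : ∀ V W : S → ℝ, (∀ t, V t - W t ≤ M * w t) → ∀ a ∈ A, ∀ P ∈ Unc a,
      ∑ t, P t * V t ≤ ∑ t, P t * W t + γ * w s * M := by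
    intro V W h a ha P hP
    have hP0 := (hUnc a ha hP).1
    calc ∑ t, P t * V t ≤ ∑ t, (P t * W t + P t * w t * M) := by
          apply Finset.sum_le_sum
          intro t _
          nlinarith [mul_le_mul_of_nonneg_left (h t) (hP0 t)]
      _ = ∑ t, P t * W t + (∑ t, P t * w t) * M := by
          rw [Finset.sum_add_distrib, Finset.sum_mul]
      _ ≤ _ := by
          have := mul_le_mul_of_nonneg_right (key a ha P hP) hM0
          linarith
  have a1 := aux_sup_inf A hA Unc hUncne hUnc r V W _
    (main V W fun t => (le_abs_self _).trans (hMt t))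
  have a2 := aux_sup_inf A hA Unc hUncne hUnc r W V _
    (main W V fun t => (le_abs_self _).trans (by rw [abs_sub_comm]; exact hMt t))
  rw [abs_le]
  constructor <;> linarith
end
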